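/- arXiv:2212.03119 — 7 statements merged into one kernel-verified Lean document; each statement's English description precedes it below -/
import Mathlib

section
/- Let R be a commutative ring, let x, y ∈ R, and let n, m ≥ 0 be natural numbers. Then (x·y − 1)^{n+m} − (n+m choose n)·(x−1)^n·(y−1)^m belongs to the ideal of R generated by (x−1)^{n+1} and (y−1)^{m+1}. (Applied to the Laurent polynomial ring ℂ[X^{±1}, Y^{±1}] and divided by factorials, this is the congruence (XY−1)^{n+m}/(n+m)! ≡ ((X−1)^n/n!)·((Y−1)^m/m!) modulo ((X−1)^{n+1}) + ((Y−1)^{m+1}) used in the local expansion theorem.) -/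
/-!
Put `a = x - 1` and `b = y - 1`, so that `x * y - 1 = a * y + b`. In the binomial expansion of
`(a * y + b) ^ (n + m)`, the terms of index `k > n` are divisible by `a ^ (n + 1)` and those of
index `k < n` by `b ^ (m + 1)`. The remaining term is `(n+m choose n) * a ^ n * y ^ n * b ^ m`,
where `y ^ n` may be replaced by `1` because `b` divides `y ^ n - 1`.
-/

/-- In any commutative ring, `(xy−1)^{n+m} − (n+m choose n)·(x−1)^n·(y−1)^m` lies in the
ideal generated by `(x−1)^{n+1}` and `(y−1)^{m+1}`. -/
theorem stmt6 (R : Type*) [CommRing R] (x y : R) (n m : ℕ) :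
    (x * y - 1) ^ (n + m) - ((n + m).choose n : R) * (x - 1) ^ n * (y - 1) ^ m ∈
      Ideal.span ({(x - 1) ^ (n + 1), (y - 1) ^ (m + 1)} : Set R) := by
  set I := Ideal.span ({(x - 1) ^ (n + 1), (y - 1) ^ (m + 1)} : Set R) with hI
  have ha : (x - 1) ^ (n + 1) ∈ I := Ideal.subset_span (by simp)
  have hb : (y - 1) ^ (m + 1) ∈ I := Ideal.subset_span (by simp)
  have hxy : x * y - 1 = (x - 1) * y + (y - 1) := by ring
  have hn : n ∈ Finset.range (n + m + 1) := by simp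
  rw [hxy, add_pow, ← Finset.add_sum_erase _ _ hn, add_sub_right_comm]
  refine I.add_mem ?_ (I.sum_mem fun k hk => ?_)
  · obtain ⟨c, hc⟩ : y - 1 ∣ y ^ n - 1 := sub_one_dvd_pow_sub_one y n
    refine I.mem_of_dvd ⟨((n + m).choose n : R) * (x - 1) ^ n * c, ?_⟩ hb
    rw [Nat.add_sub_cancel_left, mul_pow]
    linear_combination ((n + m).choose n : R) * (x - 1) ^ n * (y - 1) ^ m * hc
  · obtain ⟨hkn, hk⟩ := Finset.mem_erase.mp hk
    rw [Finset.mem_range] at hk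
    rcases lt_or_gt_of_ne hkn with h | h
    · exact I.mul_mem_right _ (I.mul_mem_left _
        (I.mem_of_dvd (pow_dvd_pow _ (by omega)) hb))
    · rw [mul_pow]
      exact I.mul_mem_right _ (I.mul_mem_right _ (I.mul_mem_right _
        (I.mem_of_dvd (pow_dvd_pow _ (by omega)) ha)))
end

section
/- In the derivation setting, both F^δ_• B and F^μ_• B are algebra filtrations of B: for all n ≥ 0 one has F^δ_n B ⊆ F^δ_{n+1} B and F^μ_n B ⊆ F^μ_{n+1} B, and for all p, q ≥ 0 one has F^δ_p B · F^δ_q B ⊆ F^δ_{p+q} B and F^μ_p B · F^μ_q B ⊆ F^μ_{p+q} B (where X·Y denotes the ℂ-span of products of an element of X and an element of Y). -/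
/-!
Write `S n` for the span of the products `c • w` with `c ∈ F^δ_n`, `w ∈ W`, so that
`F^δ_{n+1} = d⁻¹(S n)`. Since `d 1 = 0`, `F^δ_0 ⊆ F^δ_1`, and monotonicity follows by induction.
Multiplicativity is an induction on `p + q`: when one index is `0`, the product is by scalars;
otherwise, for `x ∈ F^δ_{p+1}` and `y ∈ F^δ_{q+1}`, the Leibniz rule gives
`d (x * y) = x • d y + y • d x`, with `d y ∈ S q` and `d x ∈ S p`, and the induction hypothesis for
the index pairs `(p + 1, q)` and `(q + 1, p)` places both summands in `S (p + q + 1)`. The statements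
for `F^μ` follow from those for `F^δ` because `A` is closed under multiplication.
-/

/-- The filtration `F^δ_•` associated to a `ℂ`-linear derivation `d : B → M` and a
subspace `W ⊆ M`: `F^δ_0 B = ℂ·1` and
`F^δ_{n+1} B = {b ∈ B : d(b) ∈ span_ℂ{c·w : c ∈ F^δ_n B, w ∈ W}}`. -/
noncomputable def Fdelta (B M : Type*) [CommRing B] [Algebra ℂ B]
    [AddCommGroup M] [Module ℂ M] [Module B M] [IsScalarTower ℂ B M]
    (d : B →ₗ[ℂ] M) (W : Submodule ℂ M) : ℕ → Submodule ℂ B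
  | 0 => Submodule.span ℂ {(1 : B)}
  | (n + 1) => Submodule.comap d
      (Submodule.span ℂ {m : M | ∃ c ∈ Fdelta B M d W n, ∃ w ∈ W, m = c • w})

/-- The filtration `F^μ_•`: `F^μ_n B = span_ℂ{a·c : a ∈ A, c ∈ F^δ_n B}`. -/
noncomputable def Fmu (B M : Type*) [CommRing B] [Algebra ℂ B]
    [AddCommGroup M] [Module ℂ M] [Module B M] [IsScalarTower ℂ B M]
    (A : Subalgebra ℂ B) (d : B →ₗ[ℂ] M) (W : Submodule ℂ M) (n : ℕ) : Submodule ℂ B :=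
  Submodule.span ℂ {b : B | ∃ a ∈ A, ∃ c ∈ Fdelta B M d W n, b = a * c}

/-- If multiplication by `x` maps `F^δ_n` into `F^δ_m`, then it maps the span of `F^δ_n • W` into
the span of `F^δ_m • W`. -/
theorem smul_mem_span_Fdelta_smul {B M : Type*} [CommRing B] [Algebra ℂ B]
    [AddCommGroup M] [Module ℂ M] [Module B M] [IsScalarTower ℂ B M]
    {d : B →ₗ[ℂ] M} {W : Submodule ℂ M} {n m : ℕ} {x : B}
    (h : ∀ c ∈ Fdelta B M d W n, x * c ∈ Fdelta B M d W m) {v : M}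
    (hv : v ∈ Submodule.span ℂ {v : M | ∃ c ∈ Fdelta B M d W n, ∃ w ∈ W, v = c • w}) :
    x • v ∈ Submodule.span ℂ {v : M | ∃ c ∈ Fdelta B M d W m, ∃ w ∈ W, v = c • w} := by
  induction hv using Submodule.span_induction with
  | mem v hv =>
    obtain ⟨c, hc, w, hw, rfl⟩ := hv
    exact Submodule.subset_span ⟨x * c, h c hc, w, hw, (mul_smul x c w).symm⟩
  | zero => simp
  | add u v _ _ hu hv => rw [smul_add]; exact add_mem hu hv
  | smul r v _ hv =>
    rw [← algebraMap_smul B r v, smul_comm, algebraMap_smul]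
    exact Submodule.smul_mem _ r hv

theorem Fdelta_le_succ {B M : Type*} [CommRing B] [Algebra ℂ B]
    [AddCommGroup M] [Module ℂ M] [Module B M] [IsScalarTower ℂ B M]
    {d : B →ₗ[ℂ] M} (hd : ∀ b b' : B, d (b * b') = b • d b' + b' • d b)
    (W : Submodule ℂ M) (n : ℕ) : Fdelta B M d W n ≤ Fdelta B M d W (n + 1) := by
  induction n with
  | zero =>
    have h1 : d 1 = 0 := by simpa using hd 1 1
    simp only [Fdelta, Submodule.span_singleton_le_iff_mem, Submodule.mem_comap, h1]
    exact zero_mem _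
  | succ n ih =>
    rw [Fdelta, Fdelta]
    refine Submodule.comap_mono (Submodule.span_mono ?_)
    rintro _ ⟨c, hc, w, hw, rfl⟩
    exact ⟨c, ih hc, w, hw, rfl⟩

theorem mul_mem_Fdelta {B M : Type*} [CommRing B] [Algebra ℂ B]
    [AddCommGroup M] [Module ℂ M] [Module B M] [IsScalarTower ℂ B M]
    {d : B →ₗ[ℂ] M} (hd : ∀ b b' : B, d (b * b') = b • d b' + b' • d b)
    (W : Submodule ℂ M) (p q : ℕ) {x y : B}
    (hx : x ∈ Fdelta B M d W p) (hy : y ∈ Fdelta B M d W q) :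
    x * y ∈ Fdelta B M d W (p + q) := by
  induction hk : p + q using Nat.strong_induction_on generalizing p q x y with
  | _ k ih =>
    subst hk
    match p, q with
    | 0, q =>
      obtain ⟨r, rfl⟩ := Submodule.mem_span_singleton.1 hx
      simpa using Submodule.smul_mem _ r hy
    | p + 1, 0 =>
      obtain ⟨r, rfl⟩ := Submodule.mem_span_singleton.1 hy
      simpa using Submodule.smul_mem _ r hx
    | p + 1, q + 1 =>
      rw [show p + 1 + (q + 1) = (p + q + 1) + 1 by omega, Fdelta, Submodule.mem_comap, hd]
      refine add_mem
        (smul_mem_span_Fdelta_smul (n := q) (fun c hc => ?_) ?_)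
        (smul_mem_span_Fdelta_smul (n := p) (fun c hc => ?_) ?_)
      · exact ih (p + q + 1) (by omega) (p + 1) q hx hc (by omega)
      · simpa only [Fdelta, Submodule.mem_comap] using hy
      · exact ih (p + q + 1) (by omega) (q + 1) p hy hc (by omega)
      · simpa only [Fdelta, Submodule.mem_comap] using hx

/-- In the derivation setting, both `F^δ_•` and `F^μ_•` are algebra filtrations of `B`. -/
theorem stmt7 (B M : Type*) [CommRing B] [Algebra ℂ B]
    [AddCommGroup M] [Module ℂ M] [Module B M] [IsScalarTower ℂ B M]
    (d : B →ₗ[ℂ] M) (hd : ∀ b b' : B, d (b * b') = b • d b' + b' • d b)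
    (A : Subalgebra ℂ B) (W : Submodule ℂ M) (hAW : ∀ a ∈ A, d a ∈ W) :
    (∀ n : ℕ, Fdelta B M d W n ≤ Fdelta B M d W (n + 1)) ∧
    (∀ p q : ℕ, Fdelta B M d W p * Fdelta B M d W q ≤ Fdelta B M d W (p + q)) ∧
    (∀ n : ℕ, Fmu B M A d W n ≤ Fmu B M A d W (n + 1)) ∧
    (∀ p q : ℕ, Fmu B M A d W p * Fmu B M A d W q ≤ Fmu B M A d W (p + q)) := by
  refine ⟨Fdelta_le_succ hd W, fun p q => ?_, fun n => ?_, fun p q => ?_⟩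
  · exact Submodule.mul_le.2 fun x hx y hy => mul_mem_Fdelta hd W p q hx hy
  · refine Submodule.span_mono ?_
    rintro _ ⟨a, ha, c, hc, rfl⟩
    exact ⟨a, ha, c, Fdelta_le_succ hd W n hc, rfl⟩
  · rw [Fmu, Fmu, Submodule.span_mul_span]
    refine Submodule.span_mono ?_
    rintro _ ⟨_, ⟨a, ha, c, hc, rfl⟩, _, ⟨a', ha', c', hc', rfl⟩, rfl⟩
    exact ⟨a * a', mul_mem ha ha', c * c', mul_mem_Fdelta hd W p q hc hc',
      mul_mul_mul_comm a c a' c'⟩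
end

section
/- In the derivation setting, for every n ≥ 0 one has the inclusions F^δ_n B ⊆ F^μ_n B ⊆ F^δ_{n+1} B; consequently ⋃_{n≥0} F^δ_n B = ⋃_{n≥0} F^μ_n B (equality of subalgebras of B). -/
theorem Fdelta_le_Fmu (B M : Type*) [CommRing B] [Algebra ℂ B]
    [AddCommGroup M] [Module ℂ M] [Module B M] [IsScalarTower ℂ B M]
    (d : B →ₗ[ℂ] M) (A : Subalgebra ℂ B) (W : Submodule ℂ M) (n : ℕ) :
    Fdelta B M d W n ≤ Fmu B M A d W n := fun c hc =>
  Submodule.subset_span ⟨1, A.one_mem, c, hc, (one_mul c).symm⟩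

theorem Fmu_le_Fdelta_succ (B M : Type*) [CommRing B] [Algebra ℂ B]
    [AddCommGroup M] [Module ℂ M] [Module B M] [IsScalarTower ℂ B M]
    (d : B →ₗ[ℂ] M) (hd : ∀ b b' : B, d (b * b') = b • d b' + b' • d b)
    (A : Subalgebra ℂ B) (W : Submodule ℂ M) (hAW : ∀ a ∈ A, d a ∈ W) (n : ℕ) :
    Fmu B M A d W n ≤ Fdelta B M d W (n + 1) := by
  induction n with
  | zero =>
    refine Submodule.span_le.2 ?_
    rintro _ ⟨a, ha, c, hc, rfl⟩
    have hd1 : d 1 = 0 := by simpa using hd 1 1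
    have hdc : d c = 0 := by
      obtain ⟨z, rfl⟩ := Submodule.mem_span_singleton.1 (by simpa only [Fdelta] using hc)
      rw [map_smul, hd1, smul_zero]
    rw [SetLike.mem_coe, Fdelta, Submodule.mem_comap, hd, hdc, smul_zero, zero_add]
    exact Submodule.subset_span ⟨c, hc, d a, hAW a ha, rfl⟩
  | succ k ih =>
    refine Submodule.span_le.2 ?_
    rintro _ ⟨a, ha, c, hc, rfl⟩
    rw [SetLike.mem_coe, Fdelta, Submodule.mem_comap, hd]
    refine add_mem ?_ (Submodule.subset_span ⟨c, hc, d a, hAW a ha, rfl⟩)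
    rw [Fdelta, Submodule.mem_comap] at hc
    generalize d c = m at hc ⊢
    induction hc using Submodule.span_induction with
    | mem m hm =>
      obtain ⟨c', hc', w, hw, rfl⟩ := hm
      exact Submodule.subset_span
        ⟨a * c', ih (Submodule.subset_span ⟨a, ha, c', hc', rfl⟩), w, hw, (mul_smul a c' w).symm⟩
    | zero => rw [smul_zero]; exact zero_mem _
    | add x y _ _ hx hy => rw [smul_add]; exact add_mem hx hy
    | smul z x _ hx =>
      -- The two scalar actions on `M` commute because the `ℂ`-action factors through `B`.
      rw [← algebraMap_smul B z x, smul_comm, algebraMap_smul]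
      exact Submodule.smul_mem _ z hx

/-- In the derivation setting, `F^δ_n B ⊆ F^μ_n B ⊆ F^δ_{n+1} B` for all `n`, and hence
`⋃_n F^δ_n B = ⋃_n F^μ_n B`. -/
theorem stmt8 (B M : Type*) [CommRing B] [Algebra ℂ B]
    [AddCommGroup M] [Module ℂ M] [Module B M] [IsScalarTower ℂ B M]
    (d : B →ₗ[ℂ] M) (hd : ∀ b b' : B, d (b * b') = b • d b' + b' • d b)
    (A : Subalgebra ℂ B) (W : Submodule ℂ M) (hAW : ∀ a ∈ A, d a ∈ W) :
    (∀ n : ℕ, Fdelta B M d W n ≤ Fmu B M A d W n ∧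
      Fmu B M A d W n ≤ Fdelta B M d W (n + 1)) ∧
    (⨆ n : ℕ, Fdelta B M d W n) = (⨆ n : ℕ, Fmu B M A d W n) := by
  have h1 := Fdelta_le_Fmu B M d A W
  have h2 := Fmu_le_Fdelta_succ B M d hd A W hAW
  exact ⟨fun n => ⟨h1 n, h2 n⟩, le_antisymm (iSup_mono h1)
    (iSup_le fun n => (h2 n).trans (le_iSup (Fdelta B M d W) (n + 1)))⟩
end

section
/- Let O be a Hopf algebra over ℂ. For every n ≥ 0 and every k ∈ {0, 1, …, n+1}, one has Δ(F_n^♥ O) ⊆ F_{k−1}^♥ O ⊗ O + O ⊗ F_{n−k}^♥ O, where for subspaces X, Y ⊆ O the symbol X ⊗ Y denotes the image of the canonical map X ⊗ Y → O ⊗ O, and F_{−1}^♥ O = 0. -/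
/-!
Write `p = id - η ∘ ε` and `h_n = p^{⊗(n+1)} ∘ Δ^{(n+1)}`, so that `F_n = Ker h_n`. Over a field,
`Ker (f ⊗ g) = Ker f ⊗ O + O ⊗ Ker g` (`ker_map_le_tensorSub`), so the claim is that a suitable
map `(f ⊗ g) ∘ Δ` vanishes on `F_n`.

For `1 ≤ k ≤ n` take `f = h_{k-1}` and `g = h_{n-k}`: by coassociativity `(f ⊗ g) ∘ Δ` is `h_n` up
to reassociation (`exists_heartMap_split`). For `k = 0` take `f = id` and `g = h_n`. Splitting
`id = p + η ∘ ε` gives `(id ⊗ h_n) ∘ Δ = h_{n+1} + 1 ⊗ h_n`, which vanishes on `F_n` because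
`F_n ⊆ F_{n+1}` (`exists_heartMap_succ`). The case `k = n + 1` is symmetric.
-/

open TensorProduct

universe u

/-- Iterated tensor powers `O^{⊗(n+1)}`, as bundled `ℂ`-modules. -/
noncomputable def Tpow (O : Type u) [AddCommGroup O] [Module ℂ O] : ℕ → ModuleCat.{u} ℂ
  | 0 => ModuleCat.of ℂ O
  | (n + 1) => ModuleCat.of ℂ (O ⊗[ℂ] (Tpow O n))

/-- The projection `id_O − η∘ε`. -/
noncomputable def heartProj (O : Type u) [Ring O] [HopfAlgebra ℂ O] : O →ₗ[ℂ] O :=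
  LinearMap.id - (Algebra.linearMap ℂ O).comp (Coalgebra.counit : O →ₗ[ℂ] ℂ)

/-- The map `(id − η∘ε)^{⊗(n+1)} ∘ Δ^{(n+1)} : O → O^{⊗(n+1)}`. -/
noncomputable def heartMap (O : Type u) [Ring O] [HopfAlgebra ℂ O] :
    (n : ℕ) → (O →ₗ[ℂ] Tpow O n)
  | 0 => heartProj O
  | (n + 1) =>
      (TensorProduct.map (heartProj O) (heartMap O n)).comp
        (Coalgebra.comul : O →ₗ[ℂ] O ⊗[ℂ] O)

/-- The filtration `F_n^♥ O := Ker((id − η∘ε)^{⊗(n+1)} ∘ Δ^{(n+1)})`. -/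
noncomputable def Fheart (O : Type u) [Ring O] [HopfAlgebra ℂ O] (n : ℕ) :
    Submodule ℂ O :=
  LinearMap.ker (heartMap O n)

/-- For subspaces `X, Y ⊆ O`, the subspace `X ⊗ Y` of `O ⊗ O`, i.e. the image of the
canonical map `X ⊗ Y → O ⊗ O`. -/
noncomputable def tensorSub (O : Type u) [AddCommGroup O] [Module ℂ O]
    (X Y : Submodule ℂ O) : Submodule ℂ (O ⊗[ℂ] O) :=
  LinearMap.range (TensorProduct.map X.subtype Y.subtype)

/-- The shifted filtration `n ↦ F_{n−1}^♥ O`, with the convention `F_{−1}^♥ O = 0`. -/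
noncomputable def FheartPrev (O : Type u) [Ring O] [HopfAlgebra ℂ O] :
    ℕ → Submodule ℂ O
  | 0 => ⊥
  | (n + 1) => Fheart O n

section TensorKernel

variable {V A B : Type*} [AddCommGroup V] [Module ℂ V]
  [AddCommGroup A] [Module ℂ A] [AddCommGroup B] [Module ℂ B]

/-- Over a field, `Ker (f ⊗ g) ⊆ Ker f ⊗ V + V ⊗ Ker g`. Right exactness gives this for surjective
maps; in general `f ⊗ g` factors as the surjection onto `range f ⊗ range g` followed by an
injection, by flatness. -/
theorem ker_map_le_tensorSub (f : V →ₗ[ℂ] A) (g : V →ₗ[ℂ] B) (t : V ⊗[ℂ] V)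
    (ht : TensorProduct.map f g t = 0) :
    t ∈ tensorSub V (LinearMap.ker f) ⊤ ⊔ tensorSub V ⊤ (LinearMap.ker g) := by
  have hfac : TensorProduct.map f g =
      (TensorProduct.map (LinearMap.range f).subtype (LinearMap.range g).subtype).comp
        (TensorProduct.map f.rangeRestrict g.rangeRestrict) := by
    rw [← TensorProduct.map_comp]
    rfl
  have hinj : Function.Injective
      (TensorProduct.map (LinearMap.range f).subtype (LinearMap.range g).subtype) :=
    TensorProduct.map_injective_of_flat_flat _ _
      (Submodule.subtype_injective _) (Submodule.subtype_injective _)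
  have h0 : TensorProduct.map f.rangeRestrict g.rangeRestrict t = 0 := by
    apply hinj
    rw [map_zero, ← ht, hfac]
    rfl
  have hex₁ : Function.Exact (LinearMap.ker f).subtype f.rangeRestrict := by
    rw [LinearMap.exact_iff, LinearMap.ker_rangeRestrict, Submodule.range_subtype]
  have hex₂ : Function.Exact (LinearMap.ker g).subtype g.rangeRestrict := by
    rw [LinearMap.exact_iff, LinearMap.ker_rangeRestrict, Submodule.range_subtype]
  have hk := TensorProduct.map_ker hex₁ f.surjective_rangeRestrict hex₂ g.surjective_rangeRestrict
  have hmem : t ∈ LinearMap.ker (TensorProduct.map f.rangeRestrict g.rangeRestrict) := h0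
  rw [hk, sup_comm] at hmem
  refine SetLike.le_def.mp (sup_le_sup ?_ ?_) hmem
  · rintro _ ⟨y, rfl⟩
    induction y with
    | zero => simp
    | add y z hy hz => rw [map_add]; exact add_mem hy hz
    | tmul y z => exact ⟨y ⊗ₜ ⟨z, trivial⟩, by simp⟩
  · rintro _ ⟨y, rfl⟩
    induction y with
    | zero => simp
    | add y z hy hz => rw [map_add]; exact add_mem hy hz
    | tmul y z => exact ⟨⟨y, trivial⟩ ⊗ₜ z, by simp⟩

end TensorKernel

section Coassociativity

variable {O : Type u} [Ring O] [HopfAlgebra ℂ O]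

/-- Coassociativity, in the form `((p ⊗ f)Δ ⊗ g)Δ = (p ⊗ (f ⊗ g)Δ)Δ` up to the associator. -/
theorem map_map_comul {A B C : Type*} [AddCommGroup A] [Module ℂ A] [AddCommGroup B] [Module ℂ B]
    [AddCommGroup C] [Module ℂ C] (p : O →ₗ[ℂ] A) (f : O →ₗ[ℂ] B) (g : O →ₗ[ℂ] C) (x : O) :
    TensorProduct.map ((TensorProduct.map p f).comp Coalgebra.comul) g
        (Coalgebra.comul (R := ℂ) x) =
      (TensorProduct.assoc ℂ A B C).symm
        (TensorProduct.map p ((TensorProduct.map f g).comp Coalgebra.comul)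
          (Coalgebra.comul (R := ℂ) x)) := by
  have h₁ : TensorProduct.map ((TensorProduct.map p f).comp Coalgebra.comul) g =
      (TensorProduct.map (TensorProduct.map p f) g).comp
        ((Coalgebra.comul : O →ₗ[ℂ] O ⊗[ℂ] O).rTensor O) := by
    rw [LinearMap.rTensor, ← TensorProduct.map_comp, LinearMap.comp_id]
  have h₂ : TensorProduct.map p ((TensorProduct.map f g).comp Coalgebra.comul) =
      (TensorProduct.map p (TensorProduct.map f g)).comp
        ((Coalgebra.comul : O →ₗ[ℂ] O ⊗[ℂ] O).lTensor O) := by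
    rw [LinearMap.lTensor, ← TensorProduct.map_comp, LinearMap.comp_id]
  rw [h₁, h₂, LinearMap.comp_apply, LinearMap.comp_apply, ← Coalgebra.coassoc_apply,
    LinearEquiv.eq_symm_apply]
  generalize (Coalgebra.comul : O →ₗ[ℂ] O ⊗[ℂ] O).rTensor O (Coalgebra.comul x) = t
  have h₃ : (TensorProduct.assoc ℂ A B C).toLinearMap.comp
        (TensorProduct.map (TensorProduct.map p f) g) =
      (TensorProduct.map p (TensorProduct.map f g)).comp
        (TensorProduct.assoc ℂ O O O).toLinearMap := by
    ext
    rfl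
  exact LinearMap.congr_fun h₃ t

theorem heartMap_succ (n : ℕ) : heartMap O (n + 1) =
    (TensorProduct.map (heartProj O) (heartMap O n)).comp
      (Coalgebra.comul : O →ₗ[ℂ] O ⊗[ℂ] O) := rfl

/-- `(h_a ⊗ h_b)Δ` factors through `h_{a+b+1}`, where `h_n` denotes `heartMap O n`. -/
theorem exists_heartMap_split (b a : ℕ) :
    ∃ g : Tpow O (a + b + 1) →ₗ[ℂ] (Tpow O a ⊗[ℂ] Tpow O b), ∀ x : O,
      TensorProduct.map (heartMap O a) (heartMap O b) (Coalgebra.comul (R := ℂ) x) =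
        g (heartMap O (a + b + 1) x) := by
  induction a with
  | zero =>
    rw [Nat.zero_add]
    exact ⟨LinearMap.id, fun x => rfl⟩
  | succ a ih =>
    obtain ⟨g, hg⟩ := ih
    rw [Nat.add_right_comm a 1 b]
    refine ⟨(TensorProduct.assoc ℂ O (Tpow O a) (Tpow O b)).symm.toLinearMap.comp
      (LinearMap.lTensor O g), fun x => ?_⟩
    have h : (TensorProduct.map (heartMap O a) (heartMap O b)).comp Coalgebra.comul =
        g.comp (heartMap O (a + b + 1)) := LinearMap.ext hg
    refine (map_map_comul (heartProj O) (heartMap O a) (heartMap O b) x).trans ?_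
    rw [h, ← LinearMap.lTensor_comp_map]
    rfl

theorem heartProj_one : heartProj O 1 = 0 := by
  simp [heartProj]

/-- The filtration is increasing: since `id - η ∘ ε` kills `1`, the map `h_1` kills
`1` as well, so `h_1 = h_1 ∘ (id - η ∘ ε) = h_1 ∘ h_0`; tensoring with `id - η ∘ ε` propagates this. -/
theorem exists_heartMap_succ (n : ℕ) :
    ∃ f : Tpow O n →ₗ[ℂ] Tpow O (n + 1), heartMap O (n + 1) = f.comp (heartMap O n) := by
  induction n with
  | zero =>
    have h1 : heartMap O 1 (1 : O) = 0 := by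
      change TensorProduct.map (heartProj O) (heartMap O 0)
        (Coalgebra.comul (R := ℂ) (1 : O)) = 0
      rw [Bialgebra.comul_one, Algebra.TensorProduct.one_def,
        TensorProduct.map_tmul, heartProj_one, TensorProduct.zero_tmul]
    refine ⟨heartMap O 1, LinearMap.ext fun x => ?_⟩
    change heartMap O 1 x =
      heartMap O 1 (x - algebraMap ℂ O (Coalgebra.counit (R := ℂ) x))
    rw [map_sub, Algebra.algebraMap_eq_smul_one, map_smul, h1, smul_zero, sub_zero]
  | succ n ih =>
    obtain ⟨f, hf⟩ := ih
    refine ⟨LinearMap.lTensor O f, ?_⟩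
    rw [heartMap_succ (n + 1)]
    conv_lhs => rw [hf]
    rw [← LinearMap.lTensor_comp_map]
    rfl

theorem heartMap_succ_eq_zero {n : ℕ} {x : O} (hx : heartMap O n x = 0) :
    heartMap O (n + 1) x = 0 := by
  obtain ⟨f, hf⟩ := exists_heartMap_succ (O := O) n
  rw [hf, LinearMap.comp_apply, hx, map_zero]

theorem map_counit_left {A : Type*} [AddCommGroup A] [Module ℂ A] (f : O →ₗ[ℂ] A) (x : O) :
    TensorProduct.map ((Algebra.linearMap ℂ O).comp Coalgebra.counit) f
      (Coalgebra.comul (R := ℂ) x) = 1 ⊗ₜ f x := by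
  have h : TensorProduct.map ((Algebra.linearMap ℂ O).comp Coalgebra.counit) f =
      (TensorProduct.map (Algebra.linearMap ℂ O) f).comp
        ((Coalgebra.counit : O →ₗ[ℂ] ℂ).rTensor O) := by
    rw [LinearMap.rTensor, ← TensorProduct.map_comp, LinearMap.comp_id]
  rw [h, LinearMap.comp_apply, Coalgebra.rTensor_counit_comul]
  simp

theorem map_counit_right {A : Type*} [AddCommGroup A] [Module ℂ A] (f : O →ₗ[ℂ] A) (x : O) :
    TensorProduct.map f ((Algebra.linearMap ℂ O).comp Coalgebra.counit)
      (Coalgebra.comul (R := ℂ) x) = f x ⊗ₜ 1 := by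
  have h : TensorProduct.map f ((Algebra.linearMap ℂ O).comp Coalgebra.counit) =
      (TensorProduct.map f (Algebra.linearMap ℂ O)).comp
        ((Coalgebra.counit : O →ₗ[ℂ] ℂ).lTensor O) := by
    rw [LinearMap.lTensor, ← TensorProduct.map_comp, LinearMap.comp_id]
  rw [h, LinearMap.comp_apply, Coalgebra.lTensor_counit_comul]
  simp

theorem id_eq_heartProj_add :
    (LinearMap.id : O →ₗ[ℂ] O) =
      heartProj O + (Algebra.linearMap ℂ O).comp Coalgebra.counit := by
  simp [heartProj]

end Coassociativity

/-- For `0 ≤ k ≤ n+1`, one has `Δ(F_n^♥ O) ⊆ F_{k−1}^♥ O ⊗ O + O ⊗ F_{n−k}^♥ O`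
(with `F_{−1}^♥ O = 0`). -/
theorem stmt10 (O : Type u) [Ring O] [HopfAlgebra ℂ O] (n k : ℕ) (hk : k ≤ n + 1) :
    Submodule.map (Coalgebra.comul : O →ₗ[ℂ] O ⊗[ℂ] O) (Fheart O n) ≤
      tensorSub O (FheartPrev O k) ⊤ ⊔ tensorSub O ⊤ (FheartPrev O (n + 1 - k)) := by
  rintro _ ⟨x, hx, rfl⟩
  have hx0 : heartMap O n x = 0 := hx
  have hx1 : heartMap O (n + 1) x = 0 := heartMap_succ_eq_zero hx0
  rcases k with _ | a
  · have hz : TensorProduct.map (LinearMap.id : O →ₗ[ℂ] O) (heartMap O n)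
        (Coalgebra.comul (R := ℂ) x) = 0 := by
      rw [id_eq_heartProj_add, TensorProduct.map_add_left, LinearMap.add_apply, map_counit_left,
        hx0, TensorProduct.tmul_zero, add_zero]
      exact hx1
    have := ker_map_le_tensorSub _ _ _ hz
    rwa [LinearMap.ker_id] at this
  · obtain ⟨b, rfl⟩ : ∃ b, n = a + b := ⟨n - a, by omega⟩
    rw [show a + b + 1 - (a + 1) = b by omega]
    rcases b with _ | b
    · have hz : TensorProduct.map (heartMap O a) (LinearMap.id : O →ₗ[ℂ] O)
          (Coalgebra.comul (R := ℂ) x) = 0 := by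
        rw [id_eq_heartProj_add, TensorProduct.map_add_right, LinearMap.add_apply,
          map_counit_right]
        obtain ⟨g, hg⟩ := exists_heartMap_split (O := O) 0 a
        have h₁ : TensorProduct.map (heartMap O a) (heartProj O)
            (Coalgebra.comul (R := ℂ) x) = 0 := by
          refine (hg x).trans ?_
          rw [hx1, map_zero]
          rfl
        have h₂ : heartMap O a x = 0 := hx0
        rw [h₁, h₂, TensorProduct.zero_tmul, add_zero]
      have := ker_map_le_tensorSub _ _ _ hz
      rwa [LinearMap.ker_id] at this
    · obtain ⟨g, hg⟩ := exists_heartMap_split (O := O) b a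
      refine ker_map_le_tensorSub (heartMap O a) (heartMap O b) _ ?_
      rw [hg x]
      exact (congrArg g hx0).trans (map_zero g)
end

section
/- Let O be a Hopf algebra over ℂ. For all n, m ≥ 0 one has (F_n^♥ O)·(F_m^♥ O) ⊆ F_{n+m}^♥ O, where X·Y denotes the ℂ-span of products x·y with x ∈ X, y ∈ Y. (Together with monotonicity and the coproduct compatibility, this says that F_•^♥ O is a Hopf algebra filtration of O.) -/
/-!
The argument rests on the recursive description of the filtration (`mem_Fheart_succ_iff`):
`z ∈ F_{k+1}` if and only if `Δ z - 1 ⊗ z ∈ O ⊗ F_k`. It holds because `(π ⊗ id) (Δ z) = Δ z - 1 ⊗ z`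
for `π = id - η ∘ ε`, by the counit axiom, and because `O` is flat over `ℂ`, so that
`O ⊗ ker f = ker (id ⊗ f)`. Monotonicity of the filtration follows by induction from it.

The product is then handled by induction on `n` and `m`, the case `n = 0` or `m = 0` being clear since
`F_0 = ℂ · 1`. If `Δ x = 1 ⊗ x + p` and `Δ y = 1 ⊗ y + q` with `p ∈ O ⊗ F_n`, `q ∈ O ⊗ F_m`, then
`Δ (x y) - 1 ⊗ x y = (1 ⊗ x) q + p (1 ⊗ y) + p q`, and each summand lies in `O ⊗ F_{n+m+1}` by
induction and monotonicity.
-/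

open TensorProduct

universe u

section HeartFiltration

variable {O : Type u} [Ring O] [HopfAlgebra ℂ O]

/-- The subspace `O ⊗ V` of `O ⊗ O`, for a subspace `V` of `O`. -/
noncomputable def rightTensor (V : Submodule ℂ O) : Submodule ℂ (O ⊗[ℂ] O) :=
  LinearMap.range (LinearMap.lTensor O V.subtype)

lemma tmul_mem_rightTensor {V : Submodule ℂ O} (a : O) {v : O} (hv : v ∈ V) :
    a ⊗ₜ[ℂ] v ∈ rightTensor V :=
  ⟨a ⊗ₜ[ℂ] (⟨v, hv⟩ : V), by simp⟩

lemma rightTensor_le {V : Submodule ℂ O} {T : Submodule ℂ (O ⊗[ℂ] O)}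
    (h : ∀ a : O, ∀ v ∈ V, a ⊗ₜ[ℂ] v ∈ T) : rightTensor V ≤ T := by
  rintro _ ⟨t, rfl⟩
  induction t with
  | zero => simp
  | tmul a v => simpa using h a v v.2
  | add s t hs ht => rw [map_add]; exact T.add_mem hs ht

lemma rightTensor_mono {V W : Submodule ℂ O} (h : V ≤ W) : rightTensor V ≤ rightTensor W :=
  rightTensor_le fun a _ hv => tmul_mem_rightTensor a (h hv)

lemma mul_mem_rightTensor {U V W : Submodule ℂ O} (h : U * V ≤ W) {p q : O ⊗[ℂ] O}
    (hp : p ∈ rightTensor U) (hq : q ∈ rightTensor V) : p * q ∈ rightTensor W := by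
  have hU : rightTensor U ≤ (rightTensor W).comap (LinearMap.mulRight ℂ q) := by
    refine rightTensor_le fun a u hu => ?_
    have hV : rightTensor V ≤ (rightTensor W).comap (LinearMap.mulLeft ℂ (a ⊗ₜ[ℂ] u)) := by
      refine rightTensor_le fun b v hv => ?_
      simpa using tmul_mem_rightTensor (a * b) (h (Submodule.mul_mem_mul hu hv))
    exact hV hq
  exact hU hp

/-- Flatness of `O` over `ℂ` in the form `ker (id ⊗ f) = O ⊗ ker f`. -/
lemma mem_rightTensor_ker_iff {M : Type*} [AddCommGroup M] [Module ℂ M] (f : O →ₗ[ℂ] M)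
    (t : O ⊗[ℂ] O) : t ∈ rightTensor (LinearMap.ker f) ↔ LinearMap.lTensor O f t = 0 :=
  ((Module.Flat.lTensor_exact O (LinearMap.exact_subtype_ker_map f)) t).symm

/-- The counit axiom, rewritten in terms of `id - η ∘ ε`. -/
lemma rTensor_heartProj_comul (z : O) :
    LinearMap.rTensor O (heartProj O) (Coalgebra.comul (R := ℂ) z)
      = Coalgebra.comul (R := ℂ) z - (1 : O) ⊗ₜ[ℂ] z := by
  rw [heartProj, LinearMap.rTensor_sub, LinearMap.sub_apply, LinearMap.rTensor_comp,
    LinearMap.comp_apply, Coalgebra.rTensor_counit_comul]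
  simp

/-- The recursive description of the filtration on which both inductions run. -/
lemma mem_Fheart_succ_iff (k : ℕ) (z : O) :
    z ∈ Fheart O (k + 1) ↔
      Coalgebra.comul (R := ℂ) z - (1 : O) ⊗ₜ[ℂ] z ∈ rightTensor (Fheart O k) := by
  rw [Fheart, Fheart, mem_rightTensor_ker_iff, ← rTensor_heartProj_comul, ← LinearMap.comp_apply,
    LinearMap.lTensor_comp_rTensor]
  rfl

lemma mem_Fheart_zero_iff (z : O) :
    z ∈ Fheart O 0 ↔ z = algebraMap ℂ O (Coalgebra.counit (R := ℂ) z) := by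
  change heartProj O z = 0 ↔ _
  simp [heartProj, sub_eq_zero]

lemma Fheart_le_succ (k : ℕ) : Fheart O k ≤ Fheart O (k + 1) := by
  induction k with
  | zero =>
    intro z hz
    rw [mem_Fheart_succ_iff]
    rw [mem_Fheart_zero_iff] at hz
    -- `Δ` of a scalar `c` is `c · (1 ⊗ 1) = 1 ⊗ c`, so the difference vanishes.
    rw [hz, Algebra.algebraMap_eq_smul_one, map_smul, Bialgebra.comul_one,
      Algebra.TensorProduct.one_def, TensorProduct.tmul_smul, sub_self]
    exact zero_mem _
  | succ k ih =>
    intro z hz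
    rw [mem_Fheart_succ_iff] at hz ⊢
    exact rightTensor_mono ih hz

end HeartFiltration

/-- `(F_n^♥ O)·(F_m^♥ O) ⊆ F_{n+m}^♥ O`: the filtration `F_•^♥ O` is multiplicative. -/
theorem stmt12 (O : Type u) [Ring O] [HopfAlgebra ℂ O] (n m : ℕ) :
    Fheart O n * Fheart O m ≤ Fheart O (n + m) := by
  induction n generalizing m with
  | zero =>
    rw [Submodule.mul_le]
    intro x hx y hy
    rw [mem_Fheart_zero_iff] at hx
    rw [hx, ← Algebra.smul_def, zero_add]
    exact Submodule.smul_mem _ _ hy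
  | succ n ihn =>
    induction m with
    | zero =>
      rw [Submodule.mul_le]
      intro x hx y hy
      rw [mem_Fheart_zero_iff] at hy
      rw [hy, ← Algebra.commutes, ← Algebra.smul_def]
      exact Submodule.smul_mem _ _ hx
    | succ m ihm =>
      rw [Submodule.mul_le]
      intro x hx y hy
      have hp := (mem_Fheart_succ_iff n x).1 hx
      have hq := (mem_Fheart_succ_iff m y).1 hy
      have hnm : Fheart O n * Fheart O (m + 1) ≤ Fheart O (n + 1 + m) := by
        have h := ihn (m + 1)
        rwa [show n + (m + 1) = n + 1 + m by omega] at h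
      rw [← add_assoc, mem_Fheart_succ_iff]
      have key : Coalgebra.comul (R := ℂ) (x * y) - (1 : O) ⊗ₜ[ℂ] (x * y)
          = ((1 : O) ⊗ₜ[ℂ] x) * (Coalgebra.comul (R := ℂ) y - (1 : O) ⊗ₜ[ℂ] y)
            + (Coalgebra.comul (R := ℂ) x - (1 : O) ⊗ₜ[ℂ] x) * ((1 : O) ⊗ₜ[ℂ] y)
            + (Coalgebra.comul (R := ℂ) x - (1 : O) ⊗ₜ[ℂ] x)
              * (Coalgebra.comul (R := ℂ) y - (1 : O) ⊗ₜ[ℂ] y) := by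
        have h1 : (1 : O) ⊗ₜ[ℂ] (x * y) = ((1 : O) ⊗ₜ[ℂ] x) * ((1 : O) ⊗ₜ[ℂ] y) := by simp
        rw [Bialgebra.comul_mul, h1]
        noncomm_ring
      rw [key]
      refine add_mem (add_mem ?_ ?_) ?_
      · exact mul_mem_rightTensor ihm (tmul_mem_rightTensor 1 hx) hq
      · exact mul_mem_rightTensor hnm hp (tmul_mem_rightTensor 1 hy)
      · exact mul_mem_rightTensor ihm (rightTensor_mono (Fheart_le_succ n) hp) hq
end

section
/- Let H be a Hopf algebra over ℂ, and let n, m ≥ 0. Let ξ, η : H → ℂ be linear forms with ξ vanishing on F^{n+1} H and η vanishing on F^{m+1} H. Then the convolution product ξ·η : H → ℂ, defined by (ξ·η)(h) = (ξ ⊗ η)(Δ_H(h)), vanishes on F^{n+m+1} H. (Consequently, setting F_n H^* := (F^{n+1}H)^⊥, the family F_• H^* is an algebra filtration of the convolution algebra H^*, and H' := ⋃_{n≥0} F_n H^* is a subalgebra of H^*.) -/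
/-!
On the augmentation ideal `J`, the coproduct has the shape
`Δ h = h ⊗ 1 + 1 ⊗ h + ∑ P(h₁) ⊗ P(h₂)`, where `P a = a - ε(a) 1` is the projection onto `J`.
Hence `Δ J` lies in the span `tensorFil H 1` of the tensors `a ⊗ b` with `a ∈ J ^ p`, `b ∈ J ^ q`, `p + q ≥ 1`.
The analogous spans `tensorFil H k` are multiplicative and `Δ` is an algebra morphism, so `Δ (J ^ k) ⊆ tensorFil H k`.
For `k = n + m + 1`, each generator `a ⊗ b` of `tensorFil H k` has `p ≥ n + 1` or `q ≥ m + 1`, so `ξ ⊗ η`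
kills it.
-/

open TensorProduct

universe u

/-- The augmentation ideal `J_H = Ker(ε_H)` of a Hopf algebra, as a `ℂ`-submodule. -/
noncomputable def Jaug (H : Type u) [Ring H] [HopfAlgebra ℂ H] : Submodule ℂ H :=
  LinearMap.ker (Coalgebra.counit : H →ₗ[ℂ] ℂ)

/-- The convolution product of two linear forms on a Hopf algebra:
`(ξ·η)(h) = (ξ ⊗ η)(Δ_H h)`. -/
noncomputable def convMul (H : Type u) [Ring H] [HopfAlgebra ℂ H]
    (ξ η : H →ₗ[ℂ] ℂ) : H →ₗ[ℂ] ℂ :=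
  (LinearMap.mul' ℂ ℂ).comp
    ((TensorProduct.map ξ η).comp (Coalgebra.comul : H →ₗ[ℂ] H ⊗[ℂ] H))

/-- The span of the pure tensors of total augmentation degree at least `k`. Here `J ^ 0` is the
line `ℂ · 1`, not all of `H`. -/
noncomputable def tensorFil (H : Type u) [Ring H] [HopfAlgebra ℂ H] (k : ℕ) :
    Submodule ℂ (H ⊗[ℂ] H) :=
  Submodule.span ℂ {t | ∃ p q : ℕ, k ≤ p + q ∧
    ∃ a ∈ (Jaug H) ^ p, ∃ b ∈ (Jaug H) ^ q, a ⊗ₜ[ℂ] b = t}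

lemma tmul_mem_tensorFil {H : Type u} [Ring H] [HopfAlgebra ℂ H] {k p q : ℕ} (hk : k ≤ p + q)
    {a b : H} (ha : a ∈ (Jaug H) ^ p) (hb : b ∈ (Jaug H) ^ q) :
    a ⊗ₜ[ℂ] b ∈ tensorFil H k :=
  Submodule.subset_span ⟨p, q, hk, a, ha, b, hb, rfl⟩

lemma tensorFil_mul_le (H : Type u) [Ring H] [HopfAlgebra ℂ H] (k l : ℕ) :
    tensorFil H k * tensorFil H l ≤ tensorFil H (k + l) := by
  unfold tensorFil
  rw [Submodule.span_mul_span, Submodule.span_le]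
  rintro _ ⟨_, ⟨p, q, hk, a, ha, b, hb, rfl⟩, _, ⟨p', q', hl, a', ha', b', hb', rfl⟩, rfl⟩
  simp only [Algebra.TensorProduct.tmul_mul_tmul]
  refine tmul_mem_tensorFil (p := p + p') (q := q + q') (by omega) ?_ ?_
  · rw [pow_add]; exact Submodule.mul_mem_mul ha ha'
  · rw [pow_add]; exact Submodule.mul_mem_mul hb hb'

lemma tensorFil_one_pow_le (H : Type u) [Ring H] [HopfAlgebra ℂ H] (k : ℕ) :
    tensorFil H 1 ^ k ≤ tensorFil H k := by
  induction k with
  | zero =>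
    rw [pow_zero, Submodule.one_le, Algebra.TensorProduct.one_def]
    have h1 : (1 : H) ∈ (Jaug H) ^ 0 := by
      rw [pow_zero]; exact Submodule.one_le.mp le_rfl
    exact tmul_mem_tensorFil (Nat.zero_le _) h1 h1
  | succ k ih =>
    rw [pow_succ]
    exact (mul_le_mul' ih le_rfl).trans (tensorFil_mul_le H k 1)

/-- `Δ h = h ⊗ 1 + 1 ⊗ h + ∑ P(h₁) ⊗ P(h₂)` for `h ∈ J`, with `P a = a - ε(a) 1`. -/
lemma comul_mem_tensorFil_one {H : Type u} [Ring H] [HopfAlgebra ℂ H] {h : H}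
    (hh : h ∈ Jaug H) : Coalgebra.comul (R := ℂ) h ∈ tensorFil H 1 := by
  have h1 : (1 : H) ∈ (Jaug H) ^ 0 := by
    rw [pow_zero]; exact Submodule.one_le.mp le_rfl
  have hε : Coalgebra.counit (R := ℂ) h = 0 := hh
  let P : H →ₗ[ℂ] H := LinearMap.id - Algebra.linearMap ℂ H ∘ₗ Coalgebra.counit
  have hP : ∀ a, P a ∈ (Jaug H) ^ 1 := by
    intro a
    rw [pow_one]
    simp [P, Jaug]
  have hPmem : ∀ t : H ⊗[ℂ] H, TensorProduct.map P P t ∈ tensorFil H 1 := by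
    intro t
    induction t with
    | zero => simp
    | tmul a b => exact tmul_mem_tensorFil (p := 1) (q := 1) (by omega) (hP a) (hP b)
    | add x y hx hy => rw [map_add]; exact add_mem hx hy
  -- the identity expanding `P ⊗ P` before the counit axioms are applied
  have key : ∀ t : H ⊗[ℂ] H, TensorProduct.map P P t = t
      - (Algebra.linearMap ℂ H).rTensor H (Coalgebra.counit.rTensor H t)
      - (Algebra.linearMap ℂ H).lTensor H (Coalgebra.counit.lTensor H t)
      + TensorProduct.map (Algebra.linearMap ℂ H ∘ₗ Coalgebra.counit) (Algebra.linearMap ℂ H)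
          (Coalgebra.counit.lTensor H t) := by
    intro t
    induction t with
    | zero => simp
    | tmul a b =>
      simp [P, TensorProduct.sub_tmul, TensorProduct.tmul_sub]
      abel
    | add x y hx hy =>
      simp only [map_add, hx, hy]
      abel
  have e := key (Coalgebra.comul h)
  rw [Coalgebra.rTensor_counit_comul, Coalgebra.lTensor_counit_comul] at e
  simp [hε] at e
  have : Coalgebra.comul (R := ℂ) h =
      TensorProduct.map P P (Coalgebra.comul h) + 1 ⊗ₜ[ℂ] h + h ⊗ₜ[ℂ] 1 := by
    rw [e]; abel
  rw [this]
  have hh' : h ∈ (Jaug H) ^ 1 := by rwa [pow_one]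
  exact add_mem (add_mem (hPmem _) (tmul_mem_tensorFil (by omega) h1 hh'))
    (tmul_mem_tensorFil (by omega) hh' h1)

lemma comul_mem_tensorFil {H : Type u} [Ring H] [HopfAlgebra ℂ H] {k : ℕ} {h : H}
    (hh : h ∈ (Jaug H) ^ k) : Coalgebra.comul (R := ℂ) h ∈ tensorFil H k := by
  have hle : (Jaug H).map (Bialgebra.comulAlgHom ℂ H).toLinearMap ≤ tensorFil H 1 := by
    rintro _ ⟨x, hx, rfl⟩
    exact comul_mem_tensorFil_one hx
  have hmem := Submodule.mem_map_of_mem (f := (Bialgebra.comulAlgHom ℂ H).toLinearMap) hh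
  rw [Submodule.map_pow] at hmem
  exact tensorFil_one_pow_le H k (pow_le_pow_left' hle k hmem)

/-- Positive powers of `J` decrease; this can fail at exponent `0`, where `J ^ 0 = ℂ · 1`. -/
lemma Jaug_pow_le (H : Type u) [Ring H] [HopfAlgebra ℂ H] {n p : ℕ} (hp : n + 1 ≤ p) :
    (Jaug H) ^ p ≤ (Jaug H) ^ (n + 1) := by
  have hJ : Jaug H * Jaug H ≤ Jaug H := by
    rw [Submodule.mul_le]
    intro a ha b hb
    have ha' : Coalgebra.counit (R := ℂ) a = 0 := ha
    simp [Jaug, ha']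
  induction p, hp using Nat.le_induction with
  | base => exact le_rfl
  | succ p hp ih =>
    refine le_trans ?_ ih
    obtain ⟨r, rfl⟩ : ∃ r, p = r + 1 := ⟨p - 1, by omega⟩
    rw [pow_succ, pow_succ, mul_assoc]
    exact mul_le_mul' le_rfl hJ

/-- If `ξ` vanishes on `F^{n+1} H = J_H^{n+1}` and `η` vanishes on `F^{m+1} H`, then their
convolution product vanishes on `F^{n+m+1} H`. -/
theorem stmt16 (H : Type u) [Ring H] [HopfAlgebra ℂ H] (n m : ℕ)
    (ξ η : H →ₗ[ℂ] ℂ)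
    (hξ : ∀ h ∈ (Jaug H) ^ (n + 1), ξ h = 0)
    (hη : ∀ h ∈ (Jaug H) ^ (m + 1), η h = 0) :
    ∀ h ∈ (Jaug H) ^ (n + m + 1), convMul H ξ η h = 0 := by
  intro h hh
  have hle : tensorFil H (n + m + 1) ≤
      LinearMap.ker ((LinearMap.mul' ℂ ℂ).comp (TensorProduct.map ξ η)) := by
    unfold tensorFil
    rw [Submodule.span_le]
    rintro _ ⟨p, q, hpq, a, ha, b, hb, rfl⟩
    have hab : ξ a = 0 ∨ η b = 0 := by
      rcases Nat.lt_or_ge n p with hp | hp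
      · exact Or.inl (hξ a (Jaug_pow_le H hp ha))
      · exact Or.inr (hη b (Jaug_pow_le H (by omega) hb))
    simpa using hab
  exact hle (comul_mem_tensorFil hh)
end

section
/- Let O and H be Hopf algebras over ℂ and let p : O × H → ℂ be a Hopf algebra pairing. Then for every n ≥ 0, every o ∈ F_n^♥ O and every h ∈ F^{n+1} H (the (n+1)-st power of the augmentation ideal of H), one has p(o, h) = 0. -/
/-!
For `h ∈ J_H^{n+1}` the functional `p(·, h)` factors through
`(id − η∘ε)^{⊗(n+1)} ∘ Δ^{(n+1)}`, so it vanishes on the kernel `F_n^♥ O` of that map.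
The factorization (`pairing_factors`) is proved by induction on `n`: an element `a` of `J_H`
pairs to zero with `1_O`, so `p(·, a)` is unchanged by precomposition with `id − η∘ε`, and
`p(·, a * b) = (p(·, a) ⊗ p(·, b)) ∘ Δ` passes from `b ∈ J_H^{n+1}` to `a * b ∈ J_H^{n+2}`.
-/

open TensorProduct

universe u

theorem pairing_heartProj {O H : Type u} [Ring O] [HopfAlgebra ℂ O] [Ring H] [HopfAlgebra ℂ H]
    (p : O →ₗ[ℂ] H →ₗ[ℂ] ℂ)
    (honeO : ∀ h : H, p 1 h = (Coalgebra.counit : H →ₗ[ℂ] ℂ) h)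
    {a : H} (ha : a ∈ Jaug H) : p.flip a ∘ₗ heartProj O = p.flip a := by
  have h0 : (Coalgebra.counit : H →ₗ[ℂ] ℂ) a = 0 := ha
  ext o
  simp [heartProj, Algebra.algebraMap_eq_smul_one, honeO, h0]

/-- For `h ∈ J_H^{n+1}`, the functional `p(·, h)` factors through `heartMap O n`. -/
theorem pairing_factors {O H : Type u} [Ring O] [HopfAlgebra ℂ O] [Ring H] [HopfAlgebra ℂ H]
    (p : O →ₗ[ℂ] H →ₗ[ℂ] ℂ)
    (hmulH : ∀ (o : O) (h h' : H), p o (h * h') =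
      LinearMap.mul' ℂ ℂ (TensorProduct.map (p.flip h) (p.flip h')
        ((Coalgebra.comul : O →ₗ[ℂ] O ⊗[ℂ] O) o)))
    (honeO : ∀ h : H, p 1 h = (Coalgebra.counit : H →ₗ[ℂ] ℂ) h) (n : ℕ) :
    ∀ h ∈ (Jaug H) ^ (n + 1), ∃ L : Tpow O n →ₗ[ℂ] ℂ, p.flip h = L ∘ₗ heartMap O n := by
  induction n with
  | zero =>
    intro h hh
    rw [zero_add, pow_one] at hh
    exact ⟨p.flip h, (pairing_heartProj p honeO hh).symm⟩
  | succ n ih =>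
    intro h hh
    rw [pow_succ'] at hh
    induction hh using Submodule.mul_induction_on' with
    | mem_mul_mem a ha b hb =>
      obtain ⟨L, hL⟩ := ih b hb
      refine ⟨LinearMap.mul' ℂ ℂ ∘ₗ TensorProduct.map (p.flip a) L, ?_⟩
      ext o
      have key : TensorProduct.map (p.flip a) (p.flip b) =
          TensorProduct.map (p.flip a) L ∘ₗ
            TensorProduct.map (heartProj O) (heartMap O n) := by
        rw [← TensorProduct.map_comp, pairing_heartProj p honeO ha, hL]
      rw [LinearMap.flip_apply, hmulH, key]
      rfl
    | add x _ y _ hx hy =>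
      obtain ⟨L, hL⟩ := hx
      obtain ⟨M, hM⟩ := hy
      exact ⟨L + M, by rw [map_add, hL, hM, LinearMap.add_comp]⟩

/-- Given a Hopf algebra pairing `p : O × H → ℂ`, every `o ∈ F_n^♥ O` pairs to zero with
every `h ∈ F^{n+1} H = J_H^{n+1}`. -/
theorem stmt17 (O H : Type u) [Ring O] [HopfAlgebra ℂ O] [Ring H] [HopfAlgebra ℂ H]
    (p : O →ₗ[ℂ] H →ₗ[ℂ] ℂ)
    -- p(o o', h) = Σ p(o, h⁽¹⁾) p(o', h⁽²⁾)
    (hmulO : ∀ (o o' : O) (h : H), p (o * o') h =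
      LinearMap.mul' ℂ ℂ (TensorProduct.map (p o) (p o')
        ((Coalgebra.comul : H →ₗ[ℂ] H ⊗[ℂ] H) h)))
    -- p(o, h h') = Σ p(o⁽¹⁾, h) p(o⁽²⁾, h')
    (hmulH : ∀ (o : O) (h h' : H), p o (h * h') =
      LinearMap.mul' ℂ ℂ (TensorProduct.map (p.flip h) (p.flip h')
        ((Coalgebra.comul : O →ₗ[ℂ] O ⊗[ℂ] O) o)))
    -- p(1, h) = ε_H(h)
    (honeO : ∀ h : H, p 1 h = (Coalgebra.counit : H →ₗ[ℂ] ℂ) h)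
    -- p(o, 1) = ε_O(o)
    (honeH : ∀ o : O, p o 1 = (Coalgebra.counit : O →ₗ[ℂ] ℂ) o) :
    ∀ n : ℕ, ∀ o ∈ Fheart O n, ∀ h ∈ (Jaug H) ^ (n + 1), p o h = 0 := by
  intro n o ho h hh
  obtain ⟨L, hL⟩ := pairing_factors p hmulH honeO n h hh
  have ho' : heartMap O n o = 0 := ho
  rw [← LinearMap.flip_apply, hL, LinearMap.comp_apply, ho', map_zero]
end
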